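/- Let H ∈ (1/2, 1), γ ∈ (1 − 1/(2H), 1], ε̃ ∈ (0, H − (H−1/2)/γ), α ∈ (1, 1/(H−1/2)), T > 0, M ≥ 0, K ≥ 0, K_w ≥ 0. Let ψ : ℝ^d → ℝ^m satisfy ‖ψ(z)‖ ≤ M and ‖ψ(z₁) − ψ(z₂)‖ ≤ K ( ‖z₁ − z₂‖^γ + ‖z₁ − z₂‖ ) for all z, z₁, z₂, let x ∈ ℝ^d, and let w : [0, T] → ℝ^d satisfy ‖w(u) − w(s)‖ ≤ K_w |u − s|^{H−ε̃} for all u, s ∈ [0, T]. For t ∈ (0, T] define G(t) := (1/Γ(3/2−H)) [ t^{1/2−H} ψ(x + w(t)) + (H−1/2) t^{H−1/2} ( ∫₀ᵗ (t^{1/2−H} − r^{1/2−H}) (t−r)^{−1/2−H} dr ) ψ(x + w(t)) + (H−1/2) t^{H−1/2} ∫₀ᵗ ( ψ(x + w(t)) − ψ(x + w(r)) ) (t−r)^{−1/2−H} r^{1/2−H} dr ]. Then there exists a constant C > 0, depending only on H, γ, ε̃, α, M, K, such that ∫₀ᵀ ‖G(t)‖^α dt ≤ C ( T^{(1/2−H)α+1}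 + T^{(γ(H−ε̃)+1/2−H)α+1} K_w^{γα} + T^{(1/2−ε̃)α+1} K_w^{α} ). -/

import Mathlib

open MeasureTheory intervalIntegral

lemma aux_beta (p q : ℝ) (hp : -1 < p) (hq : -1 < q) :
    IntervalIntegrable (fun s : ℝ => (1 - s) ^ p * s ^ q) volume 0 1 := by
  have h := Complex.betaIntegral_convergent (u := ((q + 1 : ℝ) : ℂ)) (v := ((p + 1 : ℝ) : ℂ))
    (by simp; linarith) (by simp; linarith)
  have h2 := h.norm
  refine h2.congr_ae ?_
  rw [Set.uIoc_of_le zero_le_one, ← Measure.restrict_congr_set Ioo_ae_eq_Ioc]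
  filter_upwards [ae_restrict_mem measurableSet_Ioo] with s hs
  rw [norm_mul]
  have e1 : ‖(s : ℂ) ^ (((q + 1 : ℝ) : ℂ) - 1)‖ = s ^ q := by
    rw [Complex.norm_cpow_eq_rpow_re_of_pos hs.1]; simp
  have e2 : ‖(1 - (s : ℂ)) ^ (((p + 1 : ℝ) : ℂ) - 1)‖ = (1 - s) ^ p := by
    rw [← Complex.ofReal_one, ← Complex.ofReal_sub,
      Complex.norm_cpow_eq_rpow_re_of_pos (by linarith [hs.2])]; simp
  rw [e1, e2, mul_comm]

lemma aux_term2 (H t : ℝ) (ht : 0 < t) :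
    (∫ r in (0:ℝ)..t, (t ^ (1/2 - H) - r ^ (1/2 - H)) * (t - r) ^ (-(1/2) - H))
      = t ^ (1 - 2*H) *
        ∫ s in (0:ℝ)..1, (1 - s ^ (1/2 - H)) * (1 - s) ^ (-(1/2) - H) := by
  have h := intervalIntegral.smul_integral_comp_mul_left (a := 0) (b := 1)
    (fun r => (t ^ (1/2 - H) - r ^ (1/2 - H)) * (t - r) ^ (-(1/2) - H)) t
  rw [mul_zero, mul_one] at h
  rw [← h, smul_eq_mul, ← intervalIntegral.integral_const_mul, ← intervalIntegral.integral_const_mul]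
  refine intervalIntegral.integral_congr fun s hs => ?_
  rw [Set.uIcc_of_le zero_le_one] at hs
  have e : t - t * s = t * (1 - s) := by ring
  rw [e, Real.mul_rpow ht.le hs.1, Real.mul_rpow ht.le (by linarith [hs.2])]
  have e2 : t ^ (1 - 2*H) = t ^ (1:ℝ) * t ^ (1/2 - H) * t ^ (-(1/2) - H) := by
    rw [← Real.rpow_add ht, ← Real.rpow_add ht]; congr 1; ring
  rw [e2, Real.rpow_one]; ring

lemma aux_term3 {E : Type*} [NormedAddCommGroup E] [NormedSpace ℝ E] (H p1 p2 c1 c2 t : ℝ)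
    (ht : 0 < t) (hH : H ∈ Set.Ioo (1/2 : ℝ) 1) (hp1 : H - 1/2 < p1) (hp2 : H - 1/2 < p2)
    (hc1 : 0 ≤ c1) (hc2 : 0 ≤ c2) (F : ℝ → E)
    (hF : ∀ r ∈ Set.Icc 0 t, ‖F r‖ ≤ c1 * (t - r) ^ p1 + c2 * (t - r) ^ p2) :
    ‖∫ r in (0:ℝ)..t, ((t - r) ^ (-(1/2) - H) * r ^ (1/2 - H)) • F r‖ ≤
      c1 * t ^ (p1 + 1 - 2*H) * (∫ s in (0:ℝ)..1, (1 - s) ^ (p1 - 1/2 - H) * s ^ (1/2 - H))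
      + c2 * t ^ (p2 + 1 - 2*H) *
        (∫ s in (0:ℝ)..1, (1 - s) ^ (p2 - 1/2 - H) * s ^ (1/2 - H)) := by
  obtain ⟨hH1, hH2⟩ := hH
  have i1 := aux_beta (p1 - 1/2 - H) (1/2 - H) (by linarith) (by linarith)
  have i2 := aux_beta (p2 - 1/2 - H) (1/2 - H) (by linarith) (by linarith)
  have h := intervalIntegral.smul_integral_comp_mul_left (a := 0) (b := 1)
    (fun r => ((t - r) ^ (-(1/2) - H) * r ^ (1/2 - H)) • F r) t
  rw [mul_zero, mul_one] at h
  rw [← h, ← intervalIntegral.integral_smul, ← intervalIntegral.integral_const_mul,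
    ← intervalIntegral.integral_const_mul,
    ← intervalIntegral.integral_add (i1.const_mul _) (i2.const_mul _)]
  refine intervalIntegral.norm_integral_le_of_norm_le zero_le_one ?_
    ((i1.const_mul _).add (i2.const_mul _))
  refine Filter.Eventually.of_forall fun s hs => ?_
  have hs0 := hs.1
  have ts : t * s ∈ Set.Icc 0 t := ⟨by positivity, by nlinarith [hs.2]⟩
  have e : t - t * s = t * (1 - s) := by ring
  rcases eq_or_lt_of_le hs.2 with h1 | h1
  · subst h1
    have : -(1/2) - H ≠ 0 := by linarith
    simp only [mul_one, sub_self, Real.zero_rpow this, zero_mul, zero_smul, smul_zero, norm_zero]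
    have := Real.rpow_nonneg (le_refl (0:ℝ)) (p1 - 1/2 - H)
    have := Real.rpow_nonneg (le_refl (0:ℝ)) (p2 - 1/2 - H)
    positivity
  · have h1s : 0 < 1 - s := by linarith
    have hb := hF _ ts
    rw [e] at hb
    rw [e, norm_smul, norm_smul, Real.norm_of_nonneg ht.le, Real.norm_of_nonneg (by positivity)]
    have key : ∀ p, t * (((t * (1 - s)) ^ (-(1/2) - H) * (t * s) ^ (1/2 - H)) *
        (t * (1 - s)) ^ p) = t ^ (p + 1 - 2*H) * ((1 - s) ^ (p - 1/2 - H) * s ^ (1/2 - H)) := by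
      intro p
      simp only [Real.mul_rpow ht.le h1s.le, Real.mul_rpow ht.le hs0.le]
      have a1 : (1 - s) ^ (p - 1/2 - H) = (1 - s) ^ (-(1/2) - H) * (1 - s) ^ p := by
        rw [← Real.rpow_add h1s]; congr 1; ring
      have a2 : t ^ (p + 1 - 2*H) = t ^ (1:ℝ) * t ^ (-(1/2) - H) * t ^ (1/2 - H) * t ^ p := by
        rw [← Real.rpow_add ht, ← Real.rpow_add ht, ← Real.rpow_add ht]; congr 1; ring
      rw [a1, a2, Real.rpow_one]; ring
    have k1 := key p1
    have k2 := key p2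
    calc _ ≤ t * (((t * (1 - s)) ^ (-(1/2) - H) * (t * s) ^ (1/2 - H)) *
            (c1 * (t * (1 - s)) ^ p1 + c2 * (t * (1 - s)) ^ p2)) := by gcongr
      _ = _ := by linear_combination c1 * k1 + c2 * k2

lemma aux_pow3 (α a b c : ℝ) (hα : 1 < α) (ha : 0 ≤ a) (hb : 0 ≤ b) (hc : 0 ≤ c) :
    (a + b + c) ^ α ≤ 3 ^ α * (a ^ α + b ^ α + c ^ α) := by
  have h0 : 0 ≤ α := by linarith
  have := Real.rpow_nonneg ha α
  have := Real.rpow_nonneg hb α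
  have := Real.rpow_nonneg hc α
  have main : ∀ m, 0 ≤ m → a ≤ m → b ≤ m → c ≤ m → m ^ α ≤ a ^ α + b ^ α + c ^ α →
      (a + b + c) ^ α ≤ 3 ^ α * (a ^ α + b ^ α + c ^ α) := by
    intro m hm h1 h2 h3 h
    calc (a + b + c) ^ α ≤ (3 * m) ^ α := Real.rpow_le_rpow (by positivity) (by linarith) h0
      _ = 3 ^ α * m ^ α := Real.mul_rpow (by norm_num) hm
      _ ≤ _ := by gcongr
  rcases le_total a b with h1 | h1 <;> rcases le_total b c with h2 | h2 <;>
    rcases le_total a c with h3 | h3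
  all_goals first
    | exact main a ha (by linarith) (by linarith) (by linarith) (by linarith)
    | exact main b hb (by linarith) (by linarith) (by linarith) (by linarith)
    | exact main c hc (by linarith) (by linarith) (by linarith) (by linarith)

/-- `L^α` bound on `(0,T)` for the Weyl-representation formula `G(t)` for
`K_H^{-1}(∫₀^· ψ(x+w(u)) du)`, with `ψ` bounded by `M` and `(γ,1)`-Hölder-type
continuous with constant `K`, and `w` being `(H−ε̃)`-Hölder with constant `K_w`. -/
theorem stmt5 (H γ εt α M K : ℝ) (hH : H ∈ Set.Ioo (1/2 : ℝ) 1)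
    (hγ : γ ∈ Set.Ioc (1 - 1/(2*H)) 1) (hεt : εt ∈ Set.Ioo (0:ℝ) (H - (H - 1/2)/γ))
    (hα : α ∈ Set.Ioo (1:ℝ) (1/(H - 1/2))) (hM : 0 ≤ M) (hK : 0 ≤ K) :
    ∃ C > (0:ℝ),
      ∀ (d m : ℕ) (T Kw : ℝ), 0 < T → 0 ≤ Kw →
      ∀ (ψ : EuclideanSpace ℝ (Fin d) → EuclideanSpace ℝ (Fin m))
        (x : EuclideanSpace ℝ (Fin d)) (w : ℝ → EuclideanSpace ℝ (Fin d)),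
        (∀ z, ‖ψ z‖ ≤ M) →
        (∀ z₁ z₂, ‖ψ z₁ - ψ z₂‖ ≤ K * (‖z₁ - z₂‖ ^ γ + ‖z₁ - z₂‖)) →
        (∀ u ∈ Set.Icc (0:ℝ) T, ∀ s ∈ Set.Icc (0:ℝ) T,
          ‖w u - w s‖ ≤ Kw * |u - s| ^ (H - εt)) →
        (∫ t in (0:ℝ)..T,
            ‖(1 / Real.Gamma (3/2 - H)) •
                ((t ^ (1/2 - H)) • ψ (x + w t)
                  + ((H - 1/2) * t ^ (H - 1/2) *
                      ∫ r in (0:ℝ)..t,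
                        (t ^ (1/2 - H) - r ^ (1/2 - H)) * (t - r) ^ (-(1/2) - H)) •
                        ψ (x + w t)
                  + ((H - 1/2) * t ^ (H - 1/2)) •
                      ∫ r in (0:ℝ)..t,
                        ((t - r) ^ (-(1/2) - H) * r ^ (1/2 - H)) •
                          (ψ (x + w t) - ψ (x + w r)))‖ ^ α)
          ≤ C * (T ^ ((1/2 - H)*α + 1)
              + T ^ ((γ*(H - εt) + 1/2 - H)*α + 1) * Kw ^ (γ*α)
              + T ^ ((1/2 - εt)*α + 1) * Kw ^ α) := by
  obtain ⟨hH1, hH2⟩ := hH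
  obtain ⟨hγ1, hγ2⟩ := hγ
  obtain ⟨hε1, hε2⟩ := hεt
  obtain ⟨hα1, hα2⟩ := hα
  have ha : 0 < H - 1/2 := by linarith
  have hγ0 : 0 < γ := by
    have : 1/(2*H) < 1 := by rw [div_lt_one (by linarith)]; linarith
    linarith
  have hp2 : H - 1/2 < H - εt := by
    have : H - 1/2 ≤ (H - 1/2)/γ := by rw [le_div_iff₀ hγ0]; nlinarith
    linarith
  have hp1 : H - 1/2 < γ * (H - εt) := by
    have h : (H - 1/2)/γ < H - εt := by linarith
    rw [div_lt_iff₀ hγ0] at h; linarith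
  have haα : (H - 1/2) * α < 1 := by
    rw [lt_div_iff₀ ha] at hα2; linarith
  have hα0 : 0 < α := by linarith
  have q1 : 0 < (1/2 - H)*α + 1 := by linarith
  have q2 : 0 < (γ*(H - εt) + 1/2 - H)*α + 1 := by
    have : 0 < γ*(H - εt) + 1/2 - H := by linarith
    positivity
  have q3 : 0 < (1/2 - εt)*α + 1 := by
    have : 0 < 1/2 - εt := by linarith
    positivity
  have hg : 0 < 1 / Real.Gamma (3/2 - H) := by
    have := Real.Gamma_pos_of_pos (show 0 < 3/2 - H by linarith)
    positivity
  set g := 1 / Real.Gamma (3/2 - H) with hgdef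
  set A := ∫ s in (0:ℝ)..1, (1 - s ^ (1/2 - H)) * (1 - s) ^ (-(1/2) - H) with hA
  set B1 := ∫ s in (0:ℝ)..1, (1 - s) ^ (γ*(H - εt) - 1/2 - H) * s ^ (1/2 - H) with hB1
  set B2 := ∫ s in (0:ℝ)..1, (1 - s) ^ ((H - εt) - 1/2 - H) * s ^ (1/2 - H) with hB2
  have hBn : ∀ p : ℝ, 0 ≤ ∫ s in (0:ℝ)..1, (1 - s) ^ p * s ^ (1/2 - H) := by
    intro p
    refine intervalIntegral.integral_nonneg zero_le_one fun s hs => ?_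
    exact mul_nonneg (Real.rpow_nonneg (by linarith [hs.2]) _) (Real.rpow_nonneg hs.1 _)
  have hB1n : 0 ≤ B1 := hBn _
  have hB2n : 0 ≤ B2 := hBn _
  set C1 := g * (M * (1 + (H - 1/2) * |A|) + (H - 1/2) * K * (B1 + B2)) with hC1
  have hC1n : 0 ≤ C1 := by positivity
  set e1 := (1/2 - H)*α + 1 with he1
  set e2 := (γ*(H - εt) + 1/2 - H)*α + 1 with he2
  set e3 := (1/2 - εt)*α + 1 with he3
  refine ⟨C1 ^ α * 3 ^ α * (1/e1 + 1/e2 + 1/e3) + 1, by positivity, ?_⟩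
  intro d m T Kw hT hKw ψ x w hψM hψ hw
  have hint : ∀ p : ℝ, 0 < p + 1 → IntervalIntegrable (fun t : ℝ => t ^ p) volume 0 T :=
    fun p hp => intervalIntegral.intervalIntegrable_rpow' (by linarith)
  have hval : ∀ p : ℝ, 0 < p + 1 → ∫ t in (0:ℝ)..T, t ^ p = T ^ (p + 1) / (p + 1) := by
    intro p hp
    rw [integral_rpow (Or.inl (by linarith)), Real.zero_rpow hp.ne', sub_zero]
  have I1 := hint _ q1
  have I2 := hint _ q2
  have I3 := hint _ q3
  have ptw : ∀ t ∈ Set.Ioc 0 T,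
      ‖g • ((t ^ (1/2 - H)) • ψ (x + w t)
          + ((H - 1/2) * t ^ (H - 1/2) *
              ∫ r in (0:ℝ)..t,
                (t ^ (1/2 - H) - r ^ (1/2 - H)) * (t - r) ^ (-(1/2) - H)) •
                ψ (x + w t)
          + ((H - 1/2) * t ^ (H - 1/2)) •
              ∫ r in (0:ℝ)..t,
                ((t - r) ^ (-(1/2) - H) * r ^ (1/2 - H)) •
                  (ψ (x + w t) - ψ (x + w r)))‖ ≤
        C1 * (t ^ (1/2 - H) + Kw ^ γ * t ^ (γ*(H - εt) + 1/2 - H) + Kw * t ^ (1/2 - εt)) := by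
    intro t ht
    have ht0 := ht.1
    have b3 := aux_term3 H (γ*(H - εt)) (H - εt) (K * Kw ^ γ) (K * Kw) t ht0 ⟨hH1, hH2⟩ hp1 hp2
      (by positivity) (by positivity) (fun r => ψ (x + w t) - ψ (x + w r)) (by
        intro r hr
        have htr : 0 ≤ t - r := by linarith [hr.2]
        have h1 := hψ (x + w t) (x + w r)
        have h2 := hw t ⟨ht0.le, ht.2⟩ r ⟨hr.1, hr.2.trans ht.2⟩
        rw [abs_of_nonneg htr] at h2
        rw [add_sub_add_left_eq_sub] at h1
        have h3 : ‖w t - w r‖ ^ γ ≤ Kw ^ γ * (t - r) ^ (γ * (H - εt)) := by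
          calc ‖w t - w r‖ ^ γ ≤ (Kw * (t - r) ^ (H - εt)) ^ γ :=
                Real.rpow_le_rpow (norm_nonneg _) h2 hγ0.le
            _ = _ := by
              rw [Real.mul_rpow hKw (Real.rpow_nonneg htr _), ← Real.rpow_mul htr,
                mul_comm γ]
        calc _ ≤ K * (‖w t - w r‖ ^ γ + ‖w t - w r‖) := h1
          _ ≤ K * (Kw ^ γ * (t - r) ^ (γ * (H - εt)) + Kw * (t - r) ^ (H - εt)) := by gcongr
          _ = _ := by ring)
    rw [← hB1, ← hB2] at b3
    rw [aux_term2 H t ht0, ← hA]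
    have hψt := hψM (x + w t)
    have r1 : t ^ (H - 1/2) * t ^ (1 - 2*H) = t ^ (1/2 - H) := by
      rw [← Real.rpow_add ht0]; congr 1; ring
    have r2 : t ^ (H - 1/2) * t ^ (γ*(H - εt) + 1 - 2*H) = t ^ (γ*(H - εt) + 1/2 - H) := by
      rw [← Real.rpow_add ht0]; congr 1; ring
    have r3 : t ^ (H - 1/2) * t ^ ((H - εt) + 1 - 2*H) = t ^ (1/2 - εt) := by
      rw [← Real.rpow_add ht0]; congr 1; ring
    have n1 : ‖(t ^ (1/2 - H)) • ψ (x + w t)‖ ≤ t ^ (1/2 - H) * M := by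
      rw [norm_smul, Real.norm_of_nonneg (by positivity)]; gcongr
    have n2 : ‖((H - 1/2) * t ^ (H - 1/2) * (t ^ (1 - 2*H) * A)) • ψ (x + w t)‖ ≤
        (H - 1/2) * t ^ (1/2 - H) * |A| * M := by
      have : (H - 1/2) * t ^ (H - 1/2) * (t ^ (1 - 2*H) * A)
          = (H - 1/2) * t ^ (1/2 - H) * A := by rw [← r1]; ring
      rw [this, norm_smul, norm_mul, Real.norm_of_nonneg (by positivity), Real.norm_eq_abs]
      gcongr
    have n3 : ‖((H - 1/2) * t ^ (H - 1/2)) •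
              ∫ r in (0:ℝ)..t,
                ((t - r) ^ (-(1/2) - H) * r ^ (1/2 - H)) •
                  (ψ (x + w t) - ψ (x + w r))‖ ≤
        (H - 1/2) * K * (B1 * (Kw ^ γ * t ^ (γ*(H - εt) + 1/2 - H))
          + B2 * (Kw * t ^ (1/2 - εt))) := by
      rw [norm_smul, Real.norm_of_nonneg (by positivity), ← r2, ← r3]
      refine (mul_le_mul_of_nonneg_left b3 (by positivity)).trans (le_of_eq ?_)
      ring
    rw [norm_smul, Real.norm_of_nonneg hg.le, hC1, mul_assoc g]
    refine mul_le_mul_of_nonneg_left ?_ hg.le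
    refine (norm_add₃_le.trans (add_le_add (add_le_add n1 n2) n3)).trans ?_
    have hX : 0 ≤ t ^ (1/2 - H) := by positivity
    have hY : 0 ≤ Kw ^ γ * t ^ (γ*(H - εt) + 1/2 - H) := by positivity
    have hZ : 0 ≤ Kw * t ^ (1/2 - εt) := by positivity
    generalize t ^ (1/2 - H) = X at *
    generalize Kw ^ γ * t ^ (γ*(H - εt) + 1/2 - H) = Y at *
    generalize Kw * t ^ (1/2 - εt) = Z at *
    have hP : 0 ≤ M * (1 + (H - 1/2) * |A|) := by positivity
    have hQ : 0 ≤ (H - 1/2) * K := by positivity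
    have s1 : 0 ≤ M * (1 + (H - 1/2) * |A|) * (Y + Z) := by positivity
    have s2 : 0 ≤ (H - 1/2) * K * (B1 * (X + Z) + B2 * (X + Y)) := by positivity
    linarith
  have hbd : ∀ t ∈ Set.Ioc 0 T,
      (C1 * (t ^ (1/2 - H) + Kw ^ γ * t ^ (γ*(H - εt) + 1/2 - H) + Kw * t ^ (1/2 - εt))) ^ α ≤
      C1 ^ α * 3 ^ α * (t ^ ((1/2 - H)*α) + t ^ ((γ*(H - εt) + 1/2 - H)*α) * Kw ^ (γ*α)
        + t ^ ((1/2 - εt)*α) * Kw ^ α) := by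
    intro t ht
    have ht0 := ht.1
    rw [Real.mul_rpow hC1n (by positivity), mul_assoc (C1 ^ α)]
    refine mul_le_mul_of_nonneg_left ?_ (by positivity)
    refine (aux_pow3 α _ _ _ hα1 (by positivity) (by positivity) (by positivity)).trans
      (le_of_eq ?_)
    rw [Real.mul_rpow (by positivity) (by positivity), Real.mul_rpow hKw (by positivity),
      ← Real.rpow_mul ht0.le, ← Real.rpow_mul ht0.le, ← Real.rpow_mul ht0.le,
      ← Real.rpow_mul hKw]
    ring
  have IR : IntervalIntegrable (fun t : ℝ => C1 ^ α * 3 ^ α * (t ^ ((1/2 - H)*α)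
      + t ^ ((γ*(H - εt) + 1/2 - H)*α) * Kw ^ (γ*α)
        + t ^ ((1/2 - εt)*α) * Kw ^ α)) volume 0 T :=
    ((I1.add (I2.mul_const _)).add (I3.mul_const _)).const_mul _
  have hmono := fun (f : ℝ → ℝ) (hf0 : ∀ t, 0 ≤ f t)
    (hf : ∀ t ∈ Set.Ioc 0 T, f t ≤ C1 ^ α * 3 ^ α * (t ^ ((1/2 - H)*α)
      + t ^ ((γ*(H - εt) + 1/2 - H)*α) * Kw ^ (γ*α)
        + t ^ ((1/2 - εt)*α) * Kw ^ α)) =>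
    show (∫ t in (0:ℝ)..T, f t) ≤ ∫ t in (0:ℝ)..T, C1 ^ α * 3 ^ α * (t ^ ((1/2 - H)*α)
      + t ^ ((γ*(H - εt) + 1/2 - H)*α) * Kw ^ (γ*α)
        + t ^ ((1/2 - εt)*α) * Kw ^ α) by
      rw [intervalIntegral.integral_of_le hT.le, intervalIntegral.integral_of_le hT.le]
      refine integral_mono_of_nonneg (Filter.Eventually.of_forall hf0) ?_ ?_
      · exact (intervalIntegrable_iff_integrableOn_Ioc_of_le hT.le).1 IR
      · filter_upwards [ae_restrict_mem measurableSet_Ioc] with t ht using hf t ht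
  refine (hmono _ (fun t => Real.rpow_nonneg (norm_nonneg _) _) (fun t ht =>
    (Real.rpow_le_rpow (norm_nonneg _) (ptw t ht) hα0.le).trans (hbd t ht))).trans ?_
  rw [intervalIntegral.integral_const_mul,
    intervalIntegral.integral_add (I1.add (I2.mul_const _)) (I3.mul_const _),
    intervalIntegral.integral_add I1 (I2.mul_const _),
    intervalIntegral.integral_mul_const, intervalIntegral.integral_mul_const,
    hval _ q1, hval _ q2, hval _ q3, ← he1, ← he2, ← he3]
  have hX : 0 ≤ T ^ e1 := by positivity
  have hY : 0 ≤ T ^ e2 * Kw ^ (γ*α) := by positivity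
  have hZ : 0 ≤ T ^ e3 * Kw ^ α := by positivity
  have hD : 0 ≤ C1 ^ α * 3 ^ α := by positivity
  have f1 : 0 ≤ 1/e1 := by positivity
  have f2 : 0 ≤ 1/e2 := by positivity
  have f3 : 0 ≤ 1/e3 := by positivity
  have : T ^ e1 / e1 + T ^ e2 / e2 * Kw ^ (γ*α) + T ^ e3 / e3 * Kw ^ α
      = (1/e1) * T ^ e1 + (1/e2) * (T ^ e2 * Kw ^ (γ*α)) + (1/e3) * (T ^ e3 * Kw ^ α) := by ring
  rw [this]
  generalize T ^ e1 = X at *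
  generalize T ^ e2 * Kw ^ (γ*α) = Y at *
  generalize T ^ e3 * Kw ^ α = Z at *
  have s : (1/e1) * X + (1/e2) * Y + (1/e3) * Z ≤ (1/e1 + 1/e2 + 1/e3) * (X + Y + Z) := by
    have : 0 ≤ 1/e1 * (Y + Z) + 1/e2 * (X + Z) + 1/e3 * (X + Y) := by positivity
    linarith
  calc _ ≤ C1 ^ α * 3 ^ α * ((1/e1 + 1/e2 + 1/e3) * (X + Y + Z)) :=
        mul_le_mul_of_nonneg_left s hD
    _ ≤ _ := by
      rw [← mul_assoc, add_mul (C1 ^ α * 3 ^ α * _)]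
      linarith
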